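/- Let k be either the ring ℤ equipped with the usual archimedean absolute value, or a field equipped with the trivial absolute value (the absolute value which is 1 on all nonzero elements). Let A be a nonzero finitely generated k-algebra whose spectrum Spec A is connected. Let ℳ(A) denote the set of multiplicative seminorms on A bounded on k, i.e., maps |·| : A → ℝ satisfying |0| = 0, |1| = 1, |ab| = |a|·|b| and |a+b| ≤ |a| + |b| for all a, b ∈ A, and |c·1_A| ≤ |c|_k for every c ∈ k, where |·|_k is the given absolute value on k; equip ℳ(A) with the weakest topology for which the map |·| ↦ |a| is continuous for every a ∈ A. Then the topological space ℳ(A) is path-connected. -/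

import Mathlib

/-- The set of multiplicative seminorms on a `k`-algebra `A` that are bounded on `k` with respect
to a given absolute value `absk` on `k`: maps `φ : A → ℝ` with `φ 0 = 0`, `φ 1 = 1`,
`φ (a*b) = φ a * φ b`, `φ (a+b) ≤ φ a + φ b`, nonnegative values (seminorm), and
`φ (c • 1) ≤ absk c` for all `c : k`.  It is topologized as a subspace of `A → ℝ` with the
product topology, i.e. with the weakest topology making `φ ↦ φ a` continuous for all `a`. -/
def berkovichSpectrum (k A : Type*) [CommRing k] [CommRing A] [Algebra k A]
    (absk : k → ℝ) : Set (A → ℝ) :=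
  {φ | φ 0 = 0 ∧ φ 1 = 1 ∧ (∀ a b : A, φ (a * b) = φ a * φ b) ∧
    (∀ a b : A, φ (a + b) ≤ φ a + φ b) ∧ (∀ a : A, 0 ≤ φ a) ∧
    ∀ c : k, φ (algebraMap k A c) ≤ absk c}

/-!
A point `x` of the Berkovich spectrum is joined, through its powers `x ^ t` with `t → 0`, to the
trivial seminorm of the prime `ker x`, so it is enough to join the trivial seminorms of any two
primes. Since `A` is Noetherian with connected spectrum, any two primes are linked by a zigzag of
immediate specializations `p ⋖ q`. For such a pair there is a real-valued valuation `v ≤ 1` with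
kernel `p` and center `q`: start from a valuation ring of the residue field of `p` dominating
`A_q`; because no prime lies strictly between `p` and `q`, all its nonzero primes contract to `q`,
so it has a rank-one coarsening with the same center. The powers `v ^ s` then run from the trivial
seminorm of `p` at `s = 0` to that of `q` at `s = ∞`.
-/

open scoped NNReal Topology

section ValuationSubring

variable {K : Type*} [Field K] {V : ValuationSubring K}

lemma eq_of_ofPrime_eq {P Q : Ideal V} [P.IsPrime] [Q.IsPrime] (h : V.ofPrime P = V.ofPrime Q) :
    P = Q := by
  rw [← V.idealOfLE_ofPrime P, ← V.idealOfLE_ofPrime Q]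
  congr!

lemma ofPrime_eq_top_iff {P : Ideal V} [P.IsPrime] : V.ofPrime P = ⊤ ↔ P = ⊥ where
  mp h := eq_of_ofPrime_eq (h.trans V.ofPrime_bot.symm)
  mpr h := by simp only [h, V.ofPrime_bot]

lemma eq_maximalIdeal_of_isCoatom (hV : IsCoatom V) {P : Ideal V} [P.IsPrime] (hP : P ≠ ⊥) :
    P = IsLocalRing.maximalIdeal V := by
  have hVP : V.ofPrime P = V :=
    (hV.le_iff.1 (V.le_ofPrime P)).resolve_left (ofPrime_eq_top_iff.not.2 hP)
  exact eq_of_ofPrime_eq (hVP.trans V.ofPrime_top.symm)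

lemma isCoatom_ofPrime {P : Ideal V} [P.IsPrime] (hP₀ : P ≠ ⊥)
    (hP : ∀ Q : Ideal V, Q.IsPrime → Q ≠ ⊥ → Q ≤ P → P ≤ Q) : IsCoatom (V.ofPrime P) := by
  refine ⟨ofPrime_eq_top_iff.not.2 hP₀, fun S hPS => ?_⟩
  have hVS : V ≤ S := (V.le_ofPrime P).trans hPS.le
  have hQP : V.idealOfLE S hVS ≤ P :=
    (V.idealOfLE_le_of_le _ S (V.le_ofPrime P) hVS hPS.le).trans (V.idealOfLE_ofPrime P).le
  by_contra hS
  rw [← V.ofPrime_idealOfLE S hVS] at hS hPS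
  have hPQ : P ≤ V.idealOfLE S hVS := hP _ inferInstance (ofPrime_eq_top_iff.not.1 hS) hQP
  exact hPS.not_ge (V.ofPrime_le_of_le _ _ hPQ)

lemma exists_isCoatom_ge {f : V} (hf₀ : f ≠ 0) (hf : f ∈ IsLocalRing.maximalIdeal V)
    (hf_mem : ∀ P : Ideal V, P.IsPrime → P ≠ ⊥ → f ∈ P) : ∃ W, V ≤ W ∧ IsCoatom W := by
  obtain ⟨P, hP, -⟩ := Ideal.exists_minimalPrimes_le ((Ideal.span_singleton_le_iff_mem _).2 hf)
  have := hP.1.1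
  refine ⟨V.ofPrime P, V.le_ofPrime P, isCoatom_ofPrime ?_ fun Q hQ hQ₀ => hP.2 ⟨hQ, ?_⟩⟩
  · rintro rfl
    exact hf₀ (by simpa using hP.1.2)
  · exact (Ideal.span_singleton_le_iff_mem _).2 (hf_mem Q hQ hQ₀)

lemma exists_dvd_pow_of_isCoatom (hV : IsCoatom V) {a b : V}
    (ha : a ∈ IsLocalRing.maximalIdeal V) (hb : b ≠ 0) : ∃ n, b ∣ a ^ n := by
  suffices a ∈ (Ideal.span {b}).radical by
    simpa only [Ideal.mem_radical_iff, Ideal.mem_span_singleton] using this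
  rw [Ideal.radical_eq_sInf, Submodule.mem_sInf]
  rintro P ⟨hbP, hP⟩
  have hP₀ : P ≠ ⊥ := by
    rintro rfl
    exact hb (by simpa using hbP)
  rwa [eq_maximalIdeal_of_isCoatom hV hP₀]

lemma mulArchimedean_valueGroup_of_isCoatom (hV : IsCoatom V) : MulArchimedean V.ValueGroup where
  arch x y hy := by
    obtain ⟨a, rfl⟩ := V.valuation_surjective x
    obtain ⟨b, rfl⟩ := V.valuation_surjective y
    rcases le_or_gt (V.valuation a) 1 with ha | ha
    · exact ⟨0, by simpa using ha⟩
    have hb : V.valuation b⁻¹ < 1 := by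
      rw [map_inv₀]
      exact inv_lt_one_of_one_lt₀ hy
    have haV : a⁻¹ ∈ V := (V.valuation_le_one_iff _).1 <| by
      rw [map_inv₀]
      exact inv_le_one_of_one_le₀ ha.le
    have ha₀ : a ≠ 0 := by
      rintro rfl
      simp at ha
    obtain ⟨n, c, hc⟩ := exists_dvd_pow_of_isCoatom hV
      (a := ⟨b⁻¹, (V.valuation_le_one_iff _).1 hb.le⟩) (b := ⟨a⁻¹, haV⟩)
      ((V.valuation_lt_one_iff _).2 hb) (by simpa [← Subtype.coe_inj] using ha₀)
    have hle : V.valuation (b⁻¹ ^ n) ≤ V.valuation a⁻¹ :=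
      (V.valuation_le_iff _ _).2 ⟨c, by simpa [mul_comm] using congrArg Subtype.val hc.symm⟩
    rw [map_pow, map_inv₀, map_inv₀, inv_pow] at hle
    have hpos {z : V.ValueGroup} (hz : 1 < z) : 0 < z := zero_lt_one.trans hz
    exact ⟨n, (inv_le_inv₀ (pow_pos (hpos hy) n) (hpos ha)).1 hle⟩

lemma exists_nnreal_valuation_isEquiv {R Γ₀ : Type*} [Ring R]
    [LinearOrderedCommGroupWithZero Γ₀] [MulArchimedean Γ₀] (v : Valuation R Γ₀)
    [v.IsNontrivial] : ∃ w : Valuation R ℝ≥0, w.IsEquiv v := by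
  have : MulArchimedean (MonoidWithZeroHom.ValueGroup₀ (.ofClass v)) :=
    .comap MonoidWithZeroHom.ValueGroup₀.embedding.toMonoidHom
      MonoidWithZeroHom.ValueGroup₀.embedding_strictMono
  obtain ⟨_⟩ := Valuation.nonempty_rankOne_iff_mulArchimedean.2 this
  have hmono := Valuation.RankOne.strictMono v
  exact ⟨v.restrict.map _ hmono.monotone,
    (Valuation.isEquiv_map_self_of_strictMono _ hmono).trans v.isEquiv_restrict.symm⟩

lemma exists_nnreal_valuation_isEquiv_of_isCoatom (hV : IsCoatom V) :
    ∃ w : Valuation K ℝ≥0, w.IsEquiv V.valuation := by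
  have := mulArchimedean_valueGroup_of_isCoatom hV
  have : V.valuation.IsNontrivial := not_not.1 (V.eq_top_iff.not.1 hV.1)
  exact exists_nnreal_valuation_isEquiv V.valuation

end ValuationSubring

section CovBy

variable {A : Type*} [CommRing A] {p q : PrimeSpectrum A}

lemma exists_valuationSubring_of_le (hpq : p ≤ q) :
    ∃ V : ValuationSubring p.asIdeal.ResidueField,
      (∀ a, algebraMap A _ a ∈ V) ∧ ∀ a, V.valuation (algebraMap A _ a) < 1 ↔ a ∈ q.asIdeal := by
  have hunit (s : q.asIdeal.primeCompl) : IsUnit (algebraMap A p.asIdeal.ResidueField s) :=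
    isUnit_iff_ne_zero.2 fun h => s.2 (hpq (Ideal.algebraMap_residueField_eq_zero.1 h))
  let φ : Localization.AtPrime q.asIdeal →+* p.asIdeal.ResidueField := IsLocalization.lift hunit
  have hφ (a : A) : φ (algebraMap A _ a) = algebraMap A _ a := IsLocalization.lift_eq hunit a
  obtain ⟨V, hV, hloc⟩ := IsLocalRing.exists_factor_valuationRing φ
  refine ⟨V, fun a => hφ a ▸ hV (algebraMap A _ a), fun a => ?_⟩
  rw [← hφ, ← V.valuation_lt_one_iff ⟨φ (algebraMap A _ a), hV _⟩, ← not_iff_not,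
    IsLocalRing.notMem_maximalIdeal]
  exact (isUnit_map_iff (φ.codRestrict V.toSubring hV) _).trans
    (IsLocalization.AtPrime.isUnit_to_map_iff _ q.asIdeal a)

lemma lt_comap_codRestrict_of_ne_bot {V : ValuationSubring p.asIdeal.ResidueField}
    (hV : ∀ a, algebraMap A _ a ∈ V) {P : Ideal V} (hP : P ≠ ⊥) :
    p.asIdeal < P.comap ((algebraMap A _).codRestrict V.toSubring hV) := by
  set ψ : A →+* V := (algebraMap A _).codRestrict V.toSubring hV
  have hψ (a : A) : ψ a = 0 ↔ a ∈ p.asIdeal :=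
    Subtype.ext_iff.trans Ideal.algebraMap_residueField_eq_zero
  refine lt_of_le_not_ge (fun a ha => ?_) fun hle => hP ((Submodule.eq_bot_iff _).2 fun x hx => ?_)
  · rw [Ideal.mem_comap, (hψ a).2 ha]
    exact P.zero_mem
  obtain ⟨a, b, hb, hab⟩ := IsFractionRing.div_surjective (A := A ⧸ p.asIdeal) x.1
  obtain ⟨a, rfl⟩ := Ideal.Quotient.mk_surjective a
  obtain ⟨b, rfl⟩ := Ideal.Quotient.mk_surjective b
  have hb₀ : ψ b ≠ 0 := fun h =>
    nonZeroDivisors.ne_zero hb (Ideal.Quotient.eq_zero_iff_mem.2 ((hψ b).1 h))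
  have hxb : x * ψ b = ψ a := Subtype.ext <|
    ((div_eq_iff fun h => hb₀ (Subtype.ext h)).1 hab).symm
  have haP : ψ a ∈ P := hxb ▸ P.mul_mem_right (ψ b) hx
  exact (mul_eq_zero.1 (hxb.trans ((hψ a).2 (hle haP)))).resolve_right hb₀

lemma comap_codRestrict_eq_of_covBy (hpq : p ⋖ q) {V : ValuationSubring p.asIdeal.ResidueField}
    (hV : ∀ a, algebraMap A _ a ∈ V)
    (hVq : ∀ a, V.valuation (algebraMap A _ a) < 1 ↔ a ∈ q.asIdeal)
    {P : Ideal V} [hPp : P.IsPrime] (hP : P ≠ ⊥) :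
    P.comap ((algebraMap A _).codRestrict V.toSubring hV) = q.asIdeal := by
  set ψ : A →+* V := (algebraMap A _).codRestrict V.toSubring hV
  let P' : PrimeSpectrum A := ⟨P.comap ψ, inferInstance⟩
  have hpP' : p < P' := lt_comap_codRestrict_of_ne_bot hV hP
  have hP'q : P' ≤ q := fun a ha =>
    (hVq a).1 ((V.valuation_lt_one_iff (ψ a)).1 (IsLocalRing.le_maximalIdeal hPp.ne_top ha))
  exact congrArg PrimeSpectrum.asIdeal ((hpq.eq_or_eq hpP'.le hP'q).resolve_left hpP'.ne')

lemma exists_nnreal_valuation_of_covBy (hpq : p ⋖ q) :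
    ∃ v : Valuation A ℝ≥0,
      (∀ a, v a ≤ 1) ∧ (∀ a, v a = 0 ↔ a ∈ p.asIdeal) ∧ ∀ a, v a < 1 ↔ a ∈ q.asIdeal := by
  obtain ⟨V, hV, hVq⟩ := exists_valuationSubring_of_le hpq.le
  obtain ⟨f, hfq, hfp⟩ := SetLike.exists_of_lt (show p.asIdeal < q.asIdeal from hpq.lt)
  obtain ⟨W, hVW, hW⟩ := exists_isCoatom_ge (V := V) (f := ⟨algebraMap A _ f, hV f⟩)
    (fun h => hfp (Ideal.algebraMap_residueField_eq_zero.1 (congrArg Subtype.val h)))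
    ((V.valuation_lt_one_iff _).2 ((hVq f).2 hfq))
    (fun P _ hP => (comap_codRestrict_eq_of_covBy hpq hV hVq hP).ge hfq)
  have hWbot : V.idealOfLE W hVW ≠ ⊥ :=
    ofPrime_eq_top_iff.not.1 ((V.ofPrime_idealOfLE W hVW).trans_ne hW.1)
  obtain ⟨w, hw⟩ := exists_nnreal_valuation_isEquiv_of_isCoatom hW
  refine ⟨w.comap (algebraMap A _), fun a => ?_, fun a => ?_, fun a => ?_⟩
  · exact hw.le_one_iff_le_one.2 ((W.valuation_le_one_iff _).2 (hVW (hV a)))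
  · rw [Valuation.comap_apply, map_eq_zero, Ideal.algebraMap_residueField_eq_zero]
  · rw [Valuation.comap_apply, hw.lt_one_iff_lt_one,
      ← comap_codRestrict_eq_of_covBy hpq hV hVq hWbot]
    exact (W.valuation_lt_one_iff ⟨_, hVW (hV a)⟩).symm

end CovBy

lemma reflTransGen_covBy_of_le {α : Type*} [PartialOrder α] [IsStronglyAtomic α] [WellFoundedGT α]
    {x y : α} (hxy : x ≤ y) : Relation.ReflTransGen (· ⋖ ·) x y := by
  induction x using WellFoundedGT.induction with
  | ind x ih =>
    obtain rfl | hlt := hxy.eq_or_lt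
    · rfl
    · obtain ⟨z, hxz, hzy⟩ := exists_covBy_le_of_lt hlt
      exact .head hxz (ih z hxz.lt hzy)

section Connected

variable {A : Type*} [CommRing A]

lemma eqvGen_le_of_finite_minimalPrimes [PreconnectedSpace (PrimeSpectrum A)]
    (hfin : (minimalPrimes A).Finite) (p q : PrimeSpectrum A) :
    Relation.EqvGen (· ≤ ·) p q := by
  refine PreconnectedSpace.induction₂ _ (fun x => ?_) inferInstance p q
  -- Near `x` there are no irreducible components other than those passing through `x`.
  have hlocal : ∀ m ∈ minimalPrimes A, ∀ᶠ y in 𝓝 x, m ≤ y.asIdeal → m ≤ x.asIdeal := by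
    intro m _
    by_cases hm : m ≤ x.asIdeal
    · exact .of_forall fun _ _ => hm
    · filter_upwards [(PrimeSpectrum.isClosed_zeroLocus (m : Set A)).isOpen_compl.mem_nhds hm]
        with y hy hmy using absurd hmy hy
  filter_upwards [(Filter.eventually_all_finite hfin).2 hlocal] with y hy
  obtain ⟨m, hm, hmy⟩ := Ideal.exists_minimalPrimes_le (I := ⊥) (J := y.asIdeal) bot_le
  let m' : PrimeSpectrum A := ⟨m, hm.1.1⟩
  have hxm : Relation.EqvGen (· ≤ ·) m' x := .rel _ _ (hy m hm hmy)
  exact hxm.symm.trans _ _ _ (.rel m' y hmy)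

lemma eqvGen_covBy [IsNoetherianRing A] [PreconnectedSpace (PrimeSpectrum A)]
    (p q : PrimeSpectrum A) : Relation.EqvGen (· ⋖ ·) p q := by
  have : WellFoundedGT (PrimeSpectrum A) :=
    StrictMono.wellFoundedGT (f := (·.asIdeal)) fun _ _ h => h
  have : WellFoundedLT (PrimeSpectrum A) := StrictMono.wellFoundedLT (f := (·.asIdeal.height))
    fun _ _ h => Ideal.height_strict_mono_of_isPrime_of_isPrime h
  have hpq := eqvGen_le_of_finite_minimalPrimes (minimalPrimes.finite_of_isNoetherianRing A) p q
  rw [← Relation.EqvGen.eqvGen_reflTransGen]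
  exact hpq.mono (fun _ _ => reflTransGen_covBy_of_le) _ _

end Connected

lemma mul_rpow_neg_log {y t : ℝ} (hy : 0 ≤ y) (ht₀ : 0 < t) (ht₁ : t ≤ 1) :
    y * t ^ (-Real.log y) = y ^ (1 - Real.log t) := by
  obtain rfl | hy := hy.eq_or_lt
  · rw [zero_mul, Real.zero_rpow (by linarith [Real.log_nonpos ht₀.le ht₁])]
  · have hswap : t ^ Real.log y = y ^ Real.log t := by
      rw [Real.rpow_def_of_pos ht₀, Real.rpow_def_of_pos hy, mul_comm]
    rw [Real.rpow_neg ht₀.le, hswap, Real.rpow_sub hy, Real.rpow_one, div_eq_mul_inv]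

namespace berkovichSpectrum

variable {k A : Type*} [CommRing k] [CommRing A] [Algebra k A] {absk : k → ℝ} {x : A → ℝ}

lemma coe_valuation_mem (hk₀ : 0 ≤ absk 0) (hk₁ : ∀ c, c ≠ 0 → 1 ≤ absk c)
    {v : Valuation A ℝ≥0} (hv : ∀ a, v a ≤ 1) :
    (fun a => (v a : ℝ)) ∈ berkovichSpectrum k A absk := by
  refine ⟨by simp, by simp, fun a b => by simp, fun a b => ?_, fun a => (v a).2, fun c => ?_⟩
  · dsimp only
    exact_mod_cast (v.map_add a b).trans (max_le_add_of_nonneg zero_le zero_le)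
  · obtain rfl | hc := eq_or_ne c 0
    · simpa using hk₀
    · exact le_trans (mod_cast hv _) (hk₁ c hc)

open Classical in
/-- The trivial seminorm attached to a prime `p`: the pullback to `A` of the trivial absolute value
on the residue field of `p`. Paths between arbitrary points are routed
through these seminorms. -/
noncomputable def trivialSeminorm (p : PrimeSpectrum A) : A → ℝ :=
  fun a => if a ∈ p.asIdeal then 0 else 1

lemma trivialSeminorm_mem (hk₀ : 0 ≤ absk 0) (hk₁ : ∀ c, c ≠ 0 → 1 ≤ absk c)
    (p : PrimeSpectrum A) : trivialSeminorm p ∈ berkovichSpectrum k A absk := by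
  classical
  let v : Valuation A ℝ≥0 := (1 : Valuation p.asIdeal.ResidueField ℝ≥0).comap (algebraMap A _)
  have hv (a : A) : v a = if a ∈ p.asIdeal then 0 else 1 := by
    simp only [v, Valuation.comap_apply, Valuation.one_apply_def,
      Ideal.algebraMap_residueField_eq_zero]
  convert coe_valuation_mem hk₀ hk₁ (v := v) fun a => ?_ using 2 with a
  · rw [hv, trivialSeminorm]
    split_ifs <;> rfl
  · rw [hv]
    split_ifs <;> simp

/-- The kernel of a multiplicative seminorm, as a point of `Spec A`. It indexes the
trivial seminorm to which that point is joined. -/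
def kernel (hx : x ∈ berkovichSpectrum k A absk) : PrimeSpectrum A where
  asIdeal :=
    { carrier := {a | x a = 0}
      add_mem' := fun {a b} (ha : x a = 0) (hb : x b = 0) =>
        le_antisymm (by simpa [ha, hb] using hx.2.2.2.1 a b) (hx.2.2.2.2.1 _)
      zero_mem' := hx.1
      smul_mem' := fun c a (ha : x a = 0) => show x (c * a) = 0 by rw [hx.2.2.1, ha, mul_zero] }
  isPrime :=
    { ne_top' := (Ideal.ne_top_iff_one _).2 fun h : x 1 = 0 => by simp [hx.2.1] at h
      mem_or_mem' := fun {a b} (h : x (a * b) = 0) => mul_eq_zero.1 (hx.2.2.1 a b ▸ h) }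

lemma mem_kernel (hx : x ∈ berkovichSpectrum k A absk) {a : A} :
    a ∈ (kernel hx).asIdeal ↔ x a = 0 := Iff.rfl

lemma rpow_mem (hk₀ : 0 ≤ absk 0) (hk₁ : ∀ c, c ≠ 0 → 1 ≤ absk c)
    (hx : x ∈ berkovichSpectrum k A absk) {t : ℝ} (ht₀ : 0 < t) (ht₁ : t ≤ 1) :
    (fun a => x a ^ t) ∈ berkovichSpectrum k A absk := by
  obtain ⟨h0, h1, hmul, hadd, hnn, hbd⟩ := hx
  refine ⟨by simp [h0, ht₀.ne'], by simp [h1], fun a b => ?_, fun a b => ?_,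
    fun a => Real.rpow_nonneg (hnn a) t, fun c => ?_⟩
  · simp only [hmul, Real.mul_rpow (hnn a) (hnn b)]
  · exact (Real.rpow_le_rpow (hnn _) (hadd a b) ht₀.le).trans
      (Real.rpow_add_le_add_rpow (hnn a) (hnn b) ht₀.le ht₁)
  · obtain rfl | hc := eq_or_ne c 0
    · simpa [h0, ht₀.ne'] using hk₀
    · calc x (algebraMap k A c) ^ t ≤ absk c ^ t := Real.rpow_le_rpow (hnn _) (hbd c) ht₀.le
        _ ≤ absk c ^ (1 : ℝ) := Real.rpow_le_rpow_of_exponent_le (hk₁ c hc) ht₁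
        _ = absk c := Real.rpow_one _

lemma joinedIn_trivialSeminorm_kernel (hk₀ : 0 ≤ absk 0) (hk₁ : ∀ c, c ≠ 0 → 1 ≤ absk c)
    (hx : x ∈ berkovichSpectrum k A absk) :
    JoinedIn (berkovichSpectrum k A absk) (trivialSeminorm (kernel hx)) x := by
  let c (t : ℝ) (a : A) : ℝ := if x a = 0 then 0 else x a ^ t
  have hc₀ : c 0 = trivialSeminorm (kernel hx) := by
    funext a
    simp only [c, trivialSeminorm, mem_kernel, Real.rpow_zero]
  have hc {t : ℝ} (ht : 0 < t) : c t = fun a => x a ^ t := by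
    funext a
    by_cases ha : x a = 0 <;> simp [c, ha, ht.ne']
  refine JoinedIn.ofLine (f := c) ?_ hc₀ (by simp [hc]) (Set.image_subset_iff.2 fun t ht => ?_)
  · refine (continuous_pi fun a => ?_).continuousOn
    by_cases ha : x a = 0
    · simp only [c, ha, if_true, continuous_const]
    · simpa only [c, ha, if_false] using Real.continuous_const_rpow ha
  · rw [Set.mem_preimage]
    obtain rfl | ht₀ := ht.1.eq_or_lt
    · rw [hc₀]
      exact trivialSeminorm_mem hk₀ hk₁ _
    · rw [hc ht₀]
      exact rpow_mem hk₀ hk₁ hx ht₀ ht.2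

lemma coe_valuation_rpow_mem (hk₀ : 0 ≤ absk 0) (hk₁ : ∀ c, c ≠ 0 → 1 ≤ absk c)
    {v : Valuation A ℝ≥0} (hv : ∀ a, v a ≤ 1) {s : ℝ} (hs : 0 < s) :
    (fun a => (v a : ℝ) ^ s) ∈ berkovichSpectrum k A absk := by
  let powHom : ℝ≥0 →*₀ ℝ≥0 := { NNReal.rpowMonoidHom s with map_zero' := NNReal.zero_rpow hs.ne' }
  exact coe_valuation_mem hk₀ hk₁ (v := v.map powHom (NNReal.monotone_rpow_of_nonneg hs.le))
    fun a => NNReal.rpow_le_one (hv a) hs.le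

lemma joinedIn_trivialSeminorm_center (hk₀ : 0 ≤ absk 0) (hk₁ : ∀ c, c ≠ 0 → 1 ≤ absk c)
    {v : Valuation A ℝ≥0} (hv : ∀ a, v a ≤ 1) {q : PrimeSpectrum A}
    (hq : ∀ a, v a < 1 ↔ a ∈ q.asIdeal) :
    JoinedIn (berkovichSpectrum k A absk) (trivialSeminorm q) (fun a => (v a : ℝ)) := by
  -- `t = exp (1 - s)` reparametrises the powers `v ^ s`, `s ∈ [1, ∞]`.
  let c (t : ℝ) (a : A) : ℝ := v a * t ^ (-Real.log (v a))
  have hlog (a : A) : 0 ≤ -Real.log (v a) :=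
    neg_nonneg.2 (Real.log_nonpos (v a).2 (mod_cast hv a))
  have hc₀ : c 0 = trivialSeminorm q := by
    funext a
    simp only [c, trivialSeminorm, ← hq]
    split_ifs with ha
    · obtain ha₀ | ha₀ := eq_or_ne (v a) 0
      · simp [ha₀]
      · have hlog_ne : -Real.log (v a) ≠ 0 :=
          neg_ne_zero.2 (Real.log_neg (by positivity) (mod_cast ha)).ne
        rw [Real.zero_rpow hlog_ne, mul_zero]
    · simp [(hv a).antisymm (not_lt.1 ha)]
  have hc {t : ℝ} (ht₀ : 0 < t) (ht₁ : t ≤ 1) : c t = fun a => (v a : ℝ) ^ (1 - Real.log t) :=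
    funext fun a => mul_rpow_neg_log (v a).2 ht₀ ht₁
  refine JoinedIn.ofLine (f := c) ?_ hc₀ (by simp [hc]) (Set.image_subset_iff.2 fun t ht => ?_)
  · exact (continuous_pi fun a =>
      continuous_const.mul (Real.continuous_rpow_const (hlog a))).continuousOn
  · rw [Set.mem_preimage]
    obtain rfl | ht₀ := ht.1.eq_or_lt
    · rw [hc₀]
      exact trivialSeminorm_mem hk₀ hk₁ _
    · rw [hc ht₀ ht.2]
      exact coe_valuation_rpow_mem hk₀ hk₁ hv (by linarith [Real.log_nonpos ht.1 ht.2])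

lemma joinedIn_trivialSeminorm_of_covBy (hk₀ : 0 ≤ absk 0) (hk₁ : ∀ c, c ≠ 0 → 1 ≤ absk c)
    {p q : PrimeSpectrum A} (hpq : p ⋖ q) :
    JoinedIn (berkovichSpectrum k A absk) (trivialSeminorm p) (trivialSeminorm q) := by
  obtain ⟨v, hv, hvp, hvq⟩ := exists_nnreal_valuation_of_covBy hpq
  have hvmem := coe_valuation_mem hk₀ hk₁ hv
  have hker : kernel hvmem = p := PrimeSpectrum.ext <| Ideal.ext fun a => by
    rw [mem_kernel, NNReal.coe_eq_zero, hvp]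
  have hpv := joinedIn_trivialSeminorm_kernel hk₀ hk₁ hvmem
  rw [hker] at hpv
  exact hpv.trans (joinedIn_trivialSeminorm_center hk₀ hk₁ hv hvq).symm

lemma joinedIn_trivialSeminorm [IsNoetherianRing A] [PreconnectedSpace (PrimeSpectrum A)]
    (hk₀ : 0 ≤ absk 0) (hk₁ : ∀ c, c ≠ 0 → 1 ≤ absk c) (p q : PrimeSpectrum A) :
    JoinedIn (berkovichSpectrum k A absk) (trivialSeminorm p) (trivialSeminorm q) := by
  induction eqvGen_covBy p q with
  | rel p q hpq => exact joinedIn_trivialSeminorm_of_covBy hk₀ hk₁ hpq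
  | refl p => exact .refl (trivialSeminorm_mem hk₀ hk₁ p)
  | symm _ _ _ ih => exact ih.symm
  | trans _ _ _ _ _ ih ih' => exact ih.trans ih'

end berkovichSpectrum

open berkovichSpectrum in
theorem stmt_7_general (k A : Type*) [CommRing k] [CommRing A] [Algebra k A]
    [IsNoetherianRing A] [ConnectedSpace (PrimeSpectrum A)] (absk : k → ℝ)
    (hk₀ : 0 ≤ absk 0) (hk₁ : ∀ c, c ≠ 0 → 1 ≤ absk c) :
    PathConnectedSpace ↥(berkovichSpectrum k A absk) := by
  obtain ⟨p⟩ : Nonempty (PrimeSpectrum A) := inferInstance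
  refine isPathConnected_iff_pathConnectedSpace.1
    ⟨trivialSeminorm p, trivialSeminorm_mem hk₀ hk₁ p, fun {x} hx => ?_⟩
  exact (joinedIn_trivialSeminorm hk₀ hk₁ p (kernel hx)).trans
    (joinedIn_trivialSeminorm_kernel hk₀ hk₁ hx)

/-- Let `k` be either the ring `ℤ` with the usual archimedean absolute value or
a field with the trivial absolute value (which is `1` on all nonzero elements), and let `A` be a
nonzero finitely generated `k`-algebra with `Spec A` connected.  Then the Berkovich spectrum
`ℳ(A)` of multiplicative seminorms on `A` bounded on `k` is path-connected. -/
theorem stmt_7 (k A : Type*) [CommRing k] [CommRing A] [Algebra k A]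
    [Nontrivial A] [Algebra.FiniteType k A]
    (absk : k → ℝ)
    (hk : (∃ e : k ≃+* ℤ, ∀ c : k, absk c = |((e c : ℤ) : ℝ)|) ∨
          (IsField k ∧ absk 0 = 0 ∧ ∀ c : k, c ≠ 0 → absk c = 1))
    (hconn : ConnectedSpace (PrimeSpectrum A)) :
    PathConnectedSpace ↥(berkovichSpectrum k A absk) := by
  have hk' : IsNoetherianRing k ∧ 0 ≤ absk 0 ∧ ∀ c, c ≠ 0 → 1 ≤ absk c := by
    rcases hk with ⟨e, he⟩ | ⟨hfield, h0, h1⟩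
    · refine ⟨isNoetherianRing_of_ringEquiv ℤ e.symm, he 0 ▸ abs_nonneg _, fun c hc => ?_⟩
      rw [he]
      exact_mod_cast Int.one_le_abs (e.map_ne_zero_iff.2 hc)
    · let := hfield.toField
      exact ⟨inferInstance, h0.ge, fun c hc => (h1 c hc).ge⟩
  obtain ⟨_, hk₀, hk₁⟩ := hk'
  have := Algebra.FiniteType.isNoetherianRing k A
  exact stmt_7_general k A absk hk₀ hk₁
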